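/- Let 𝒳 be a measurable space, 𝒳̂ a nonempty set, K > 0, and ρ : 𝒳 × 𝒳̂ → [0, K] a function such that ρ(·, x̂) is measurable for every x̂ ∈ 𝒳̂. Fix n ≥ 1, N ≥ 1, and define for a probability measure P on 𝒳 the N-codeword operational distortion-rate value D̂_N(P) := inf { D(P, 𝒞) : 𝒞 ⊆ 𝒳̂^n finite, 1 ≤ |𝒞| ≤ N }. Then for any probability measures P, Q on 𝒳: (i) |D̂_N(P) − D̂_N(Q)| ≤ K · d_V(P, Q); and (ii) if δ ≥ 0 and 𝒞* is a codebook with 1 ≤ |𝒞*| ≤ N and D(Q, 𝒞*) ≤ D̂_N(Q) + δ, then D(P, 𝒞*) ≤ D̂_N(P) + 2K · d_V(P, Q) + δ. -/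

import Mathlib

open MeasureTheory

/-- The variational distance `d_V(P,Q) = sup_B |P(B) - Q(B)|`, the supremum
over all measurable sets `B`. -/
noncomputable def dV {X : Type*} [MeasurableSpace X] (P Q : Measure X) : ℝ :=
  ⨆ B : {s : Set X // MeasurableSet s}, |(P B.1).toReal - (Q B.1).toReal|

/-- The per-letter expected distortion of the minimum-distortion encoder with
codebook `C ⊆ 𝒳̂^n` on the i.i.d. source with marginal `P`:
`D(P, C) = (1/n) ∫ min_{c ∈ C} Σ_i ρ(x_i, c_i) dP^{⊗n}(x^n)`. -/
noncomputable def Dcode {X Xh : Type*} [MeasurableSpace X] (ρ : X → Xh → ℝ) (n : ℕ)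
    (P : Measure X) (C : Finset (Fin n → Xh)) : ℝ :=
  (1 / n : ℝ) *
    ∫ x, sInf ((fun c => ∑ i, ρ (x i) (c i)) '' (C : Set (Fin n → Xh)))
      ∂(Measure.pi fun _ : Fin n => P)

/-- The `N`-codeword operational distortion-rate value
`D̂_N(P) := inf { D(P, C) : C ⊆ 𝒳̂^n finite, 1 ≤ |C| ≤ N }`. -/
noncomputable def DhatN {X Xh : Type*} [MeasurableSpace X] (ρ : X → Xh → ℝ) (n N : ℕ)
    (P : Measure X) : ℝ :=
  ⨅ C : {C : Finset (Fin n → Xh) // C.Nonempty ∧ C.card ≤ N}, Dcode ρ n P C.1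

lemma abs_measure_sub_le_dV {X : Type*} [MeasurableSpace X] (P Q : Measure X)
    [IsProbabilityMeasure P] [IsProbabilityMeasure Q] {s : Set X} (hs : MeasurableSet s) :
    |P.real s - Q.real s| ≤ dV P Q := by
  refine le_ciSup (f := fun B : {s : Set X // MeasurableSet s} =>
    |(P B.1).toReal - (Q B.1).toReal|) ⟨1, ?_⟩ ⟨s, hs⟩
  rintro _ ⟨B, rfl⟩
  exact abs_sub_le_of_nonneg_of_le (measureReal_nonneg (μ := P)) measureReal_le_one
    (measureReal_nonneg (μ := Q)) measureReal_le_one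

lemma dV_comm {X : Type*} [MeasurableSpace X] (P Q : Measure X) : dV P Q = dV Q P := by
  simp only [dV, abs_sub_comm]

/-- Integrals of a measurable function of oscillation at most `K` against two probability
measures differ by at most `K` times their variational distance. -/
lemma integral_le_integral_add_mul_dV {X : Type*} [MeasurableSpace X] (P Q : Measure X)
    [IsProbabilityMeasure P] [IsProbabilityMeasure Q] {g : X → ℝ} (hg : Measurable g) {K : ℝ}
    (hosc : ∀ x y, g x ≤ g y + K) :
    ∫ x, g x ∂P ≤ ∫ x, g x ∂Q + K * dV P Q := by
  obtain ⟨x₀⟩ : Nonempty X := nonempty_of_isProbabilityMeasure P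
  have hK : 0 ≤ K := by linarith [hosc x₀ x₀]
  have hbdd : BddBelow (Set.range g) := ⟨g x₀ - K, by rintro _ ⟨y, rfl⟩; linarith [hosc x₀ y]⟩
  have : Nonempty X := ⟨x₀⟩
  set m := ⨅ x, g x
  set h : X → ℝ := fun x => g x - m with hh
  have h0 : ∀ x, 0 ≤ h x := fun x => sub_nonneg.2 (ciInf_le hbdd x)
  have h1 : ∀ x, h x ≤ K := fun x => by
    have : g x - K ≤ m := le_ciInf fun y => by linarith [hosc x y]
    simp only [hh]; linarith
  have hm : Measurable h := hg.sub_const m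
  have hint (μ : Measure X) [IsProbabilityMeasure μ] : Integrable h μ :=
    .of_bound hm.aestronglyMeasurable K
      (.of_forall fun x => by rw [Real.norm_of_nonneg (h0 x)]; exact h1 x)
  have hshift (μ : Measure X) [IsProbabilityMeasure μ] : ∫ x, g x ∂μ = ∫ x, h x ∂μ + m := by
    have : g = fun x => h x + m := by ext x; simp [hh]
    rw [this, integral_add (hint μ) (integrable_const m)]
    simp
  have hcake (μ : Measure X) [IsProbabilityMeasure μ] :
      ∫ x, h x ∂μ = ∫ t in Set.Ioc 0 K, μ.real {a | t ≤ h a} :=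
    (hint μ).integral_eq_integral_Ioc_meas_le (.of_forall h0) (.of_forall h1)
  have htail (μ : Measure X) [IsProbabilityMeasure μ] :
      IntegrableOn (fun t => μ.real {a | t ≤ h a}) (Set.Ioc 0 K) := by
    have hanti : Antitone fun t => μ.real {a | t ≤ h a} := fun s t hst =>
      measureReal_mono fun a (ha : t ≤ h a) => hst.trans ha
    exact Integrable.of_bound hanti.measurable.aestronglyMeasurable 1
      (.of_forall fun t => by
        rw [Real.norm_of_nonneg measureReal_nonneg]; exact measureReal_le_one)
  have hle : ∫ t in Set.Ioc 0 K, P.real {a | t ≤ h a} ≤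
      ∫ t in Set.Ioc 0 K, (Q.real {a | t ≤ h a} + dV P Q) := by
    refine setIntegral_mono (htail P) ((htail Q).add (integrable_const _)) fun t => ?_
    have := abs_measure_sub_le_dV P Q
      (measurableSet_le measurable_const hm : MeasurableSet {a | t ≤ h a})
    simp only
    linarith [le_abs_self (P.real {a | t ≤ h a} - Q.real {a | t ≤ h a})]
  rw [integral_add (htail Q) (integrable_const _)] at hle
  simp only [integral_const, measureReal_restrict_apply_univ, Real.volume_real_Ioc_of_le hK,
    sub_zero, smul_eq_mul] at hle
  rw [hshift P, hshift Q, hcake P, hcake Q]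
  linarith

lemma integral_pi_succ {X : Type*} [MeasurableSpace X] (P : Measure X) [IsProbabilityMeasure P]
    {n : ℕ} {f : (Fin (n + 1) → X) → ℝ} (hf : Measurable f) {B : ℝ} (hB : ∀ x, ‖f x‖ ≤ B) :
    ∫ x, f x ∂(Measure.pi fun _ => P) =
      ∫ y, ∫ a, f (Fin.cons a y) ∂P ∂(Measure.pi fun _ : Fin n => P) := by
  have hmp := (measurePreserving_piFinSuccAbove (fun _ : Fin (n + 1) => P) 0).symm
  rw [← hmp.integral_comp (MeasurableEquiv.measurableEmbedding _), integral_prod_symm]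
  · simp [MeasurableEquiv.piFinSuccAbove_symm_apply, Fin.insertNthEquiv]
  · exact .of_bound (hf.comp (MeasurableEquiv.measurable _)).aestronglyMeasurable B
      (.of_forall fun z => hB _)

lemma measurable_fin_cons {X : Type*} [MeasurableSpace X] {n : ℕ} :
    Measurable fun z : X × (Fin n → X) => (Fin.cons z.1 z.2 : Fin (n + 1) → X) := by
  refine measurable_pi_iff.2 (Fin.cases ?_ fun i => ?_)
  · simpa using! measurable_fst
  · simpa using! (measurable_pi_apply i).comp measurable_snd

/-- Hybrid argument: integrals of a function with bounded differences `K` against two product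
measures `P^{⊗n}` and `Q^{⊗n}` differ by at most `n K` times the variational distance of the
marginals. -/
lemma integral_pi_le_integral_pi_add_mul_dV {X : Type*} [MeasurableSpace X] (P Q : Measure X)
    [IsProbabilityMeasure P] [IsProbabilityMeasure Q] {K B : ℝ} {n : ℕ} {f : (Fin n → X) → ℝ}
    (hf : Measurable f) (hB : ∀ x, ‖f x‖ ≤ B)
    (hdiff : ∀ x i a, f (Function.update x i a) ≤ f x + K) :
    ∫ x, f x ∂(Measure.pi fun _ => P) ≤
      ∫ x, f x ∂(Measure.pi fun _ => Q) + n * (K * dV P Q) := by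
  induction n with
  | zero => simp [Measure.pi_of_empty (fun _ : Fin 0 => P) finZeroElim,
      Measure.pi_of_empty (fun _ : Fin 0 => Q) finZeroElim]
  | succ n ih =>
    have hcons := hf.comp (measurable_fin_cons (X := X) (n := n))
    have hslice (y : Fin n → X) : Measurable fun a => f (Fin.cons a y) :=
      hcons.comp measurable_prodMk_right
    have hsint (μ : Measure X) [IsProbabilityMeasure μ] (y : Fin n → X) :
        Integrable (fun a => f (Fin.cons a y)) μ :=
      .of_bound (hslice y).aestronglyMeasurable B (.of_forall fun a => hB _)
    have hmarg (μ : Measure X) [IsProbabilityMeasure μ] :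
        Measurable fun y : Fin n → X => ∫ a, f (Fin.cons a y) ∂μ :=
      (hcons.stronglyMeasurable.integral_prod_left' (μ := μ)).measurable
    have hmB (μ : Measure X) [IsProbabilityMeasure μ] (y : Fin n → X) :
        ‖∫ a, f (Fin.cons a y) ∂μ‖ ≤ B := by
      simpa using norm_integral_le_of_norm_le_const (μ := μ)
        (.of_forall fun a => hB (Fin.cons a y))
    have hmint (μ : Measure X) [IsProbabilityMeasure μ] :
        Integrable (fun y : Fin n → X => ∫ a, f (Fin.cons a y) ∂μ) (Measure.pi fun _ => Q) :=
      .of_bound (hmarg μ).aestronglyMeasurable B (.of_forall (hmB μ))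
    have hmdiff (y : Fin n → X) (i : Fin n) (b : X) :
        ∫ a, f (Fin.cons a (Function.update y i b)) ∂P ≤ ∫ a, f (Fin.cons a y) ∂P + K := by
      have : ∫ a, f (Fin.cons a y) ∂P + K = ∫ a, (f (Fin.cons a y) + K) ∂P := by
        rw [integral_add (hsint P y) (integrable_const K)]
        simp
      rw [this]
      refine integral_mono (hsint P _) ((hsint P y).add (integrable_const K)) fun a => ?_
      simp only [Fin.cons_update]
      exact hdiff _ _ _
    have hswap : ∫ y, ∫ a, f (Fin.cons a y) ∂P ∂(Measure.pi fun _ : Fin n => Q) ≤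
        ∫ y, ∫ a, f (Fin.cons a y) ∂Q ∂(Measure.pi fun _ : Fin n => Q) + K * dV P Q := by
      have hle : ∫ y, ∫ a, f (Fin.cons a y) ∂P ∂(Measure.pi fun _ : Fin n => Q) ≤
          ∫ y, (∫ a, f (Fin.cons a y) ∂Q + K * dV P Q) ∂(Measure.pi fun _ : Fin n => Q) := by
        refine integral_mono (hmint P) ((hmint Q).add (integrable_const _)) fun y => ?_
        refine integral_le_integral_add_mul_dV P Q (hslice y) fun a b => ?_
        have := hdiff (Fin.cons b y) 0 a
        rwa [Fin.update_cons_zero] at this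
      rw [integral_add (hmint Q) (integrable_const _)] at hle
      simpa using hle
    rw [integral_pi_succ P hf hB, integral_pi_succ Q hf hB]
    have := ih (hmarg P) (hmB P) hmdiff
    push_cast
    linarith

section Codebook

variable {X Xh : Type*} {K : ℝ} {ρ : X → Xh → ℝ} {n : ℕ}
  {C : Finset (Fin n → Xh)}

lemma exists_sInf_distortion_eq (ρ : X → Xh → ℝ) (hC : C.Nonempty) (x : Fin n → X) :
    ∃ c ∈ C, sInf ((fun c => ∑ i, ρ (x i) (c i)) '' (C : Set (Fin n → Xh))) =
      ∑ i, ρ (x i) (c i) := by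
  rw [← Finset.inf'_eq_csInf_image _ hC]
  exact Finset.exists_mem_eq_inf' hC _

lemma sInf_distortion_le (ρ : X → Xh → ℝ) {c : Fin n → Xh} (hc : c ∈ C) (x : Fin n → X) :
    sInf ((fun c => ∑ i, ρ (x i) (c i)) '' (C : Set (Fin n → Xh))) ≤ ∑ i, ρ (x i) (c i) :=
  csInf_le (C.finite_toSet.image _).bddBelow ⟨c, hc, rfl⟩

variable [MeasurableSpace X]

lemma measurable_sInf_distortion (hρm : ∀ xh, Measurable fun x => ρ x xh) (hC : C.Nonempty) :
    Measurable fun x : Fin n → X =>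
      sInf ((fun c => ∑ i, ρ (x i) (c i)) '' (C : Set (Fin n → Xh))) := by
  have heq : (fun x : Fin n → X =>
      sInf ((fun c => ∑ i, ρ (x i) (c i)) '' (C : Set (Fin n → Xh)))) =
        C.inf' hC fun c x => ∑ i, ρ (x i) (c i) := by
    ext x
    rw [Finset.inf'_apply, Finset.inf'_eq_csInf_image]
  rw [heq]
  refine Finset.inf'_induction hC _ (fun _ h₁ _ h₂ => h₁.inf h₂) fun c _ => ?_
  exact Finset.measurable_fun_sum _ fun i _ => (hρm (c i)).comp (measurable_pi_apply i)

lemma Dcode_nonneg (hρ0 : ∀ x xh, 0 ≤ ρ x xh) (P : Measure X) : 0 ≤ Dcode ρ n P C := by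
  refine mul_nonneg (by positivity) (integral_nonneg fun x => Real.sInf_nonneg ?_)
  rintro _ ⟨c, -, rfl⟩
  exact Finset.sum_nonneg fun i _ => hρ0 _ _

lemma Dcode_le_add_mul_dV (hρm : ∀ xh, Measurable fun x => ρ x xh)
    (hρ0 : ∀ x xh, 0 ≤ ρ x xh) (hρK : ∀ x xh, ρ x xh ≤ K) (hn : 1 ≤ n)
    (P Q : Measure X) [IsProbabilityMeasure P] [IsProbabilityMeasure Q] (hC : C.Nonempty) :
    Dcode ρ n P C ≤ Dcode ρ n Q C + K * dV P Q := by
  have hB (x : Fin n → X) :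
      ‖sInf ((fun c => ∑ i, ρ (x i) (c i)) '' (C : Set (Fin n → Xh)))‖ ≤ n * K := by
    obtain ⟨c, -, h⟩ := exists_sInf_distortion_eq ρ hC x
    rw [h, Real.norm_of_nonneg (Finset.sum_nonneg fun i _ => hρ0 _ _)]
    simpa using Finset.sum_le_sum fun i (_ : i ∈ Finset.univ) => hρK (x i) (c i)
  have hdiff (x : Fin n → X) (j : Fin n) (a : X) :
      sInf ((fun c => ∑ i, ρ (Function.update x j a i) (c i)) '' (C : Set (Fin n → Xh))) ≤
        sInf ((fun c => ∑ i, ρ (x i) (c i)) '' (C : Set (Fin n → Xh))) + K := by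
    obtain ⟨c, hc, h⟩ := exists_sInf_distortion_eq ρ hC x
    refine (sInf_distortion_le ρ hc _).trans ?_
    have hsum : ∑ i, ρ (Function.update x j a i) (c i) ≤
        ∑ i, (ρ (x i) (c i) + if i = j then K else 0) := by
      refine Finset.sum_le_sum fun i _ => ?_
      rcases eq_or_ne i j with rfl | hij
      · simpa using (hρK a (c i)).trans (le_add_of_nonneg_left (hρ0 (x i) (c i)))
      · simp [hij]
    rw [h]
    simpa [Finset.sum_add_distrib] using hsum
  have key := integral_pi_le_integral_pi_add_mul_dV P Q (measurable_sInf_distortion hρm hC) hB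
    hdiff
  have hn' : (0 : ℝ) < n := by exact_mod_cast hn
  simp only [Dcode, one_div_mul_eq_div]
  rw [div_add' _ _ _ hn'.ne']
  gcongr
  linarith

lemma DhatN_le_Dcode (hρ0 : ∀ x xh, 0 ≤ ρ x xh) {N : ℕ} (P : Measure X)
    (hC : C.Nonempty) (hCN : C.card ≤ N) : DhatN ρ n N P ≤ Dcode ρ n P C :=
  ciInf_le (f := fun C : {C : Finset (Fin n → Xh) // C.Nonempty ∧ C.card ≤ N} => Dcode ρ n P C.1)
    ⟨0, by rintro _ ⟨_, rfl⟩; exact Dcode_nonneg hρ0 P⟩ ⟨C, hC, hCN⟩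

lemma DhatN_le_add_mul_dV [Nonempty Xh] (hρm : ∀ xh, Measurable fun x => ρ x xh)
    (hρ0 : ∀ x xh, 0 ≤ ρ x xh) (hρK : ∀ x xh, ρ x xh ≤ K) (hn : 1 ≤ n) {N : ℕ} (hN : 1 ≤ N)
    (P Q : Measure X) [IsProbabilityMeasure P] [IsProbabilityMeasure Q] :
    DhatN ρ n N P ≤ DhatN ρ n N Q + K * dV P Q := by
  have : Nonempty {C : Finset (Fin n → Xh) // C.Nonempty ∧ C.card ≤ N} :=
    ⟨{Classical.arbitrary _}, by simp, by simpa using hN⟩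
  rw [← sub_le_iff_le_add]
  refine le_ciInf fun C => sub_le_iff_le_add.2 ?_
  exact (DhatN_le_Dcode hρ0 P C.2.1 C.2.2).trans
    (Dcode_le_add_mul_dV hρm hρ0 hρK hn P Q C.2.1)

end Codebook

/-- For a distortion measure `ρ : 𝒳 × 𝒳̂ → [0, K]` and any probability measures `P, Q`:
(i) `|D̂_N(P) - D̂_N(Q)| ≤ K · d_V(P, Q)`; and (ii) if `C*` is a codebook with
`1 ≤ |C*| ≤ N` and `D(Q, C*) ≤ D̂_N(Q) + δ` with `δ ≥ 0`, then
`D(P, C*) ≤ D̂_N(P) + 2K · d_V(P, Q) + δ`. -/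
theorem stmt4 {X Xh : Type*} [MeasurableSpace X] [Nonempty Xh]
    (K : ℝ) (hK : 0 < K) (ρ : X → Xh → ℝ)
    (hρm : ∀ xh : Xh, Measurable fun x => ρ x xh)
    (hρ0 : ∀ x xh, 0 ≤ ρ x xh) (hρK : ∀ x xh, ρ x xh ≤ K)
    (n N : ℕ) (hn : 1 ≤ n) (hN : 1 ≤ N)
    (P Q : Measure X) [IsProbabilityMeasure P] [IsProbabilityMeasure Q] :
    |DhatN ρ n N P - DhatN ρ n N Q| ≤ K * dV P Q ∧
    ∀ δ : ℝ, 0 ≤ δ → ∀ Cstar : Finset (Fin n → Xh),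
      Cstar.Nonempty → Cstar.card ≤ N →
      Dcode ρ n Q Cstar ≤ DhatN ρ n N Q + δ →
      Dcode ρ n P Cstar ≤ DhatN ρ n N P + 2 * K * dV P Q + δ := by
  have hQP := dV_comm Q P
  refine ⟨abs_sub_le_iff.2 ⟨?_, ?_⟩, fun δ _ C hC hCN h => ?_⟩
  · linarith [DhatN_le_add_mul_dV hρm hρ0 hρK hn hN P Q]
  · rw [← hQP]
    linarith [DhatN_le_add_mul_dV hρm hρ0 hρK hn hN Q P]
  · have h₁ := Dcode_le_add_mul_dV hρm hρ0 hρK hn P Q hC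
    have h₂ := DhatN_le_add_mul_dV hρm hρ0 hρK hn hN Q P
    rw [hQP] at h₂
    linarith
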